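/- The good terms and abstractions form the initial freshness-substitution model: for every FS model (T, A, VAR, OP, ABS, FRESH, FRESHABS, substitution) there exist functions f : term → T and fAbs : abs → A such that for all good terms X, Y, good abstractions A, and good inputs inp, binp of domain cardinality < |var|: f (Var xs x) = VAR xs x; f (Op δ inp binp) = OP δ (↑f inp) (↑fAbs binp); fAbs (Abs xs x X) = ABS xs x (f X); f (X[Y/y]_ys) = (f X)[(f Y)/y]_ys; fAbs (A[Y/y]_ys) = (fAbs A)[(f Y)/y]_ys; fresh xs x X implies FRESH xs x (f X); and freshAbs xs x A implies FRESHABS xs x (fAbs A). Moreover f and fAbs are unique on good items: any g : term → T and gAbs : abs → A satisfying the same commutation and preservation properties agree with f on every good term and with fAbs on every good abstraction. -/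

import Mathlib

open scoped Classical

universe u

section Binding

variable (var varsort index bindex opsym : Type u)

/-! ### Inputs -/

/-- An `(α,β)`-input: a partial function from `α` to `β`. -/
abbrev Input (α β : Type u) : Type u := α → Option β

/-- The domain of an input. -/
def idom {α β : Type u} (inp : Input α β) : Set α := {a | inp a ≠ none}

/-- The componentwise lifting of a predicate to inputs. -/
def liftP {α β : Type u} (P : β → Prop) (inp : Input α β) : Prop :=
  ∀ a b, inp a = some b → P b

/-- The componentwise lifting of a function to inputs. -/
def liftF {α β γ : Type u} (f : β → γ) (inp : Input α β) : Input α γ :=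
  fun a => (inp a).map f

/-- An input is small if its domain has cardinality smaller than that of `var`. -/
def smallDom {α β : Type u} (inp : Input α β) : Prop :=
  Cardinal.mk (idom inp) < Cardinal.mk var

/-! ### Quasiterms -/

mutual
/-- Quasiterms: raw terms before quotienting by alpha-equivalence. -/
inductive QTerm : Type u where
  | qVar : varsort → var → QTerm
  | qOp : opsym → (index → Option QTerm) → (bindex → Option QAbs) → QTerm
/-- Quasiabstractions. -/
inductive QAbs : Type u where
  | qAbs : varsort → var → QTerm → QAbs
end

/-- Transposition of two variables. -/
noncomputable def swapVar (z1 z2 x : var) : var :=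
  if x = z1 then z2 else if x = z2 then z1 else x

/-- Sort-aware transposition of variables (acts only on variables of varsort `zs`). -/
noncomputable def swapVarS (zs xs : varsort) (z1 z2 x : var) : var :=
  if xs = zs then swapVar var z1 z2 x else x

variable {var varsort index bindex opsym}

/-- Swapping of the variables `z1`, `z2` at varsort `zs` in a quasiterm
(transposing them everywhere, including binding positions). -/
noncomputable def qSwap (z1 z2 : var) (zs : varsort) :
    QTerm var varsort index bindex opsym → QTerm var varsort index bindex opsym :=
  QTerm.rec (motive_1 := fun _ => QTerm var varsort index bindex opsym)
    (motive_2 := fun _ => QAbs var varsort index bindex opsym)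
    (motive_3 := fun _ => Option (QTerm var varsort index bindex opsym))
    (motive_4 := fun _ => Option (QAbs var varsort index bindex opsym))
    (fun xs x => .qVar xs (swapVarS var varsort zs xs z1 z2 x))
    (fun d _ _ rinp rbinp => .qOp d rinp rbinp)
    (fun xs x _ rX => .qAbs xs (swapVarS var varsort zs xs z1 z2 x) rX)
    none (fun _ r => some r) none (fun _ r => some r)

/-- Swapping of variables in a quasiabstraction. -/
noncomputable def qSwapAbs (z1 z2 : var) (zs : varsort) :
    QAbs var varsort index bindex opsym → QAbs var varsort index bindex opsym
  | .qAbs xs x X => .qAbs xs (swapVarS var varsort zs xs z1 z2 x) (qSwap z1 z2 zs X)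

/-! ### Freshness and goodness -/

mutual
/-- `QFresh ys y X`: the variable `y` of varsort `ys` has no free occurrence in `X`. -/
inductive QFresh : varsort → var → QTerm var varsort index bindex opsym → Prop where
  | qVar : ∀ {ys y xs x}, (ys, y) ≠ (xs, x) → QFresh ys y (.qVar xs x)
  | qOp : ∀ {ys y d inp binp}, (∀ i X, inp i = some X → QFresh ys y X) →
      (∀ j A, binp j = some A → QFreshAbs ys y A) → QFresh ys y (.qOp d inp binp)
/-- Freshness for quasiabstractions. -/
inductive QFreshAbs : varsort → var → QAbs var varsort index bindex opsym → Prop where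
  | qAbs_bound : ∀ {xs x X}, QFreshAbs xs x (.qAbs xs x X)
  | qAbs_body : ∀ {ys y xs x X}, QFresh ys y X → QFreshAbs ys y (.qAbs xs x X)
end

mutual
/-- Good quasiterms: all constructors branch less than `|var|`. -/
inductive QGood : QTerm var varsort index bindex opsym → Prop where
  | qVar : ∀ {xs x}, QGood (.qVar xs x)
  | qOp : ∀ {d inp binp}, (∀ i X, inp i = some X → QGood X) →
      (∀ j A, binp j = some A → QGoodAbs A) →
      smallDom var inp → smallDom var binp → QGood (.qOp d inp binp)
/-- Good quasiabstractions. -/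
inductive QGoodAbs : QAbs var varsort index bindex opsym → Prop where
  | qAbs : ∀ {xs x X}, QGood X → QGoodAbs (.qAbs xs x X)
end

/-! ### Alpha-equivalence -/

mutual
/-- Alpha-equivalence of quasiterms. -/
inductive Alpha : QTerm var varsort index bindex opsym →
    QTerm var varsort index bindex opsym → Prop where
  | qVar : ∀ {xs x}, Alpha (.qVar xs x) (.qVar xs x)
  | qOp : ∀ {d inp binp inp' binp'},
      (∀ i, inp i = none ↔ inp' i = none) →
      (∀ i X X', inp i = some X → inp' i = some X' → Alpha X X') →
      (∀ j, binp j = none ↔ binp' j = none) →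
      (∀ j A A', binp j = some A → binp' j = some A' → AlphaAbs A A') →
      Alpha (.qOp d inp binp) (.qOp d inp' binp')
/-- Alpha-equivalence of quasiabstractions (the exists-fresh formulation). -/
inductive AlphaAbs : QAbs var varsort index bindex opsym →
    QAbs var varsort index bindex opsym → Prop where
  | qAbs : ∀ {xs x x' X X' y}, y ∉ ({x, x'} : Set var) →
      QFresh xs y X → QFresh xs y X' →
      Alpha (qSwap y x xs X) (qSwap y x' xs X') →
      AlphaAbs (.qAbs xs x X) (.qAbs xs x' X')
end

/-! ### Terms and abstractions as quotients -/

variable (var varsort index bindex opsym)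

/-- Terms: quasiterms modulo alpha-equivalence. -/
def Term : Type u := Quot (@Alpha var varsort index bindex opsym)

/-- Abstractions: quasiabstractions modulo alpha-equivalence. -/
def Abstr : Type u := Quot (@AlphaAbs var varsort index bindex opsym)

variable {var varsort index bindex opsym}

/-- The projection from quasiterms to terms. -/
def tmk : QTerm var varsort index bindex opsym → Term var varsort index bindex opsym :=
  Quot.mk _

/-- The projection from quasiabstractions to abstractions. -/
def amk : QAbs var varsort index bindex opsym → Abstr var varsort index bindex opsym :=
  Quot.mk _

/-- A representative of a term. -/
noncomputable def trep (X : Term var varsort index bindex opsym) :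
    QTerm var varsort index bindex opsym := Quot.out X

/-- A representative of an abstraction. -/
noncomputable def arep (A : Abstr var varsort index bindex opsym) :
    QAbs var varsort index bindex opsym := Quot.out A

/-- Good terms. -/
def good (X : Term var varsort index bindex opsym) : Prop := QGood (trep X)

/-- Good abstractions. -/
def goodAbs (A : Abstr var varsort index bindex opsym) : Prop := QGoodAbs (arep A)

/-- The variable-injection constructor on terms. -/
def Var (xs : varsort) (x : var) : Term var varsort index bindex opsym :=
  tmk (.qVar xs x)

/-- The operation constructor on terms. -/
noncomputable def Op (d : opsym) (inp : Input index (Term var varsort index bindex opsym))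
    (binp : Input bindex (Abstr var varsort index bindex opsym)) :
    Term var varsort index bindex opsym :=
  tmk (.qOp d (liftF trep inp) (liftF arep binp))

/-- The abstraction constructor. -/
noncomputable def Abs (xs : varsort) (x : var) (X : Term var varsort index bindex opsym) :
    Abstr var varsort index bindex opsym :=
  amk (.qAbs xs x (trep X))

/-- Freshness on terms. -/
def fresh (ys : varsort) (y : var) (X : Term var varsort index bindex opsym) : Prop :=
  QFresh ys y (trep X)

/-- Freshness on abstractions. -/
def freshAbs (ys : varsort) (y : var) (A : Abstr var varsort index bindex opsym) : Prop :=
  QFreshAbs ys y (arep A)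

/-- Swapping on terms. -/
noncomputable def tswap (X : Term var varsort index bindex opsym)
    (z1 z2 : var) (zs : varsort) : Term var varsort index bindex opsym :=
  tmk (qSwap z1 z2 zs (trep X))

/-! ### Substitution -/

mutual
/-- The graph of capture-avoiding substitution on quasiterms:
`QSubst X Y y ys Z` means that `Z` is a result of substituting `Y` for the free
occurrences of the variable `y` of varsort `ys` in `X` (along a capture-free
representative). -/
inductive QSubst : QTerm var varsort index bindex opsym →
    QTerm var varsort index bindex opsym → var → varsort →
    QTerm var varsort index bindex opsym → Prop where
  | var_eq : ∀ {Y y ys}, QSubst (.qVar ys y) Y y ys Y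
  | var_ne : ∀ {Y y ys xs x}, (xs, x) ≠ (ys, y) → QSubst (.qVar xs x) Y y ys (.qVar xs x)
  | op : ∀ {Y y ys d inp binp inp' binp'},
      (∀ i, inp i = none ↔ inp' i = none) →
      (∀ i X X', inp i = some X → inp' i = some X' → QSubst X Y y ys X') →
      (∀ j, binp j = none ↔ binp' j = none) →
      (∀ j A A', binp j = some A → binp' j = some A' → QSubstAbs A Y y ys A') →
      QSubst (.qOp d inp binp) Y y ys (.qOp d inp' binp')
/-- The graph of capture-avoiding substitution on quasiabstractions. -/
inductive QSubstAbs : QAbs var varsort index bindex opsym →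
    QTerm var varsort index bindex opsym → var → varsort →
    QAbs var varsort index bindex opsym → Prop where
  | abs : ∀ {Y y ys xs x X X'}, (xs, x) ≠ (ys, y) → QFresh xs x Y →
      QSubst X Y y ys X' → QSubstAbs (.qAbs xs x X) Y y ys (.qAbs xs x X')
end

/-- The graph of capture-avoiding substitution on terms. -/
def SubstRel (X Y : Term var varsort index bindex opsym) (y : var) (ys : varsort)
    (Z : Term var varsort index bindex opsym) : Prop :=
  ∃ qX qZ, tmk qX = X ∧ tmk qZ = Z ∧ QSubst qX (trep Y) y ys qZ

/-- Capture-avoiding substitution on terms: `subst X Y y ys` is `X[Y/y]_ys`. -/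
noncomputable def subst (X Y : Term var varsort index bindex opsym)
    (y : var) (ys : varsort) : Term var varsort index bindex opsym :=
  if h : ∃ Z, SubstRel X Y y ys Z then h.choose else X

/-- The graph of capture-avoiding substitution on abstractions. -/
def SubstAbsRel (A : Abstr var varsort index bindex opsym)
    (Y : Term var varsort index bindex opsym) (y : var) (ys : varsort)
    (B : Abstr var varsort index bindex opsym) : Prop :=
  ∃ qA qB, amk qA = A ∧ amk qB = B ∧ QSubstAbs qA (trep Y) y ys qB

/-- Capture-avoiding substitution on abstractions: `substAbs A Y y ys` is `A[Y/y]_ys`. -/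
noncomputable def substAbs (A : Abstr var varsort index bindex opsym)
    (Y : Term var varsort index bindex opsym) (y : var) (ys : varsort) :
    Abstr var varsort index bindex opsym :=
  if h : ∃ B, SubstAbsRel A Y y ys B then h.choose else A

/-! ### Parallel substitution -/

mutual
/-- The graph of capture-avoiding parallel substitution on quasiterms, along an
assignment `ρ : varsort → var → Option qterm`. -/
inductive QPSubst : QTerm var varsort index bindex opsym →
    (varsort → var → Option (QTerm var varsort index bindex opsym)) →
    QTerm var varsort index bindex opsym → Prop where
  | var_some : ∀ {ρ xs x Y}, ρ xs x = some Y → QPSubst (.qVar xs x) ρ Y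
  | var_none : ∀ {ρ xs x}, ρ xs x = none → QPSubst (.qVar xs x) ρ (.qVar xs x)
  | op : ∀ {ρ d inp binp inp' binp'},
      (∀ i, inp i = none ↔ inp' i = none) →
      (∀ i X X', inp i = some X → inp' i = some X' → QPSubst X ρ X') →
      (∀ j, binp j = none ↔ binp' j = none) →
      (∀ j A A', binp j = some A → binp' j = some A' → QPSubstAbs A ρ A') →
      QPSubst (.qOp d inp binp) ρ (.qOp d inp' binp')
/-- The graph of capture-avoiding parallel substitution on quasiabstractions. -/
inductive QPSubstAbs : QAbs var varsort index bindex opsym →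
    (varsort → var → Option (QTerm var varsort index bindex opsym)) →
    QAbs var varsort index bindex opsym → Prop where
  | abs : ∀ {ρ xs x X X'}, ρ xs x = none →
      (∀ ys y Y, ρ ys y = some Y → QFresh xs x Y) →
      QPSubst X ρ X' → QPSubstAbs (.qAbs xs x X) ρ (.qAbs xs x X')
end

/-- Turning a term-valued assignment into a quasiterm-valued one, by picking
representatives. -/
noncomputable def qassign (ρ : varsort → var → Option (Term var varsort index bindex opsym)) :
    varsort → var → Option (QTerm var varsort index bindex opsym) :=
  fun xs x => (ρ xs x).map trep

/-- The graph of parallel substitution on terms. -/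
def PSubstRel (X : Term var varsort index bindex opsym)
    (ρ : varsort → var → Option (Term var varsort index bindex opsym))
    (Z : Term var varsort index bindex opsym) : Prop :=
  ∃ qX qZ, tmk qX = X ∧ tmk qZ = Z ∧ QPSubst qX (qassign ρ) qZ

/-- Capture-avoiding parallel substitution on terms: `psubst X ρ` is `X[ρ]`. -/
noncomputable def psubst (X : Term var varsort index bindex opsym)
    (ρ : varsort → var → Option (Term var varsort index bindex opsym)) :
    Term var varsort index bindex opsym :=
  if h : ∃ Z, PSubstRel X ρ Z then h.choose else X

/-- The graph of parallel substitution on abstractions. -/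
def PSubstAbsRel (A : Abstr var varsort index bindex opsym)
    (ρ : varsort → var → Option (Term var varsort index bindex opsym))
    (B : Abstr var varsort index bindex opsym) : Prop :=
  ∃ qA qB, amk qA = A ∧ amk qB = B ∧ QPSubstAbs qA (qassign ρ) qB

/-- Capture-avoiding parallel substitution on abstractions. -/
noncomputable def psubstAbs (A : Abstr var varsort index bindex opsym)
    (ρ : varsort → var → Option (Term var varsort index bindex opsym)) :
    Abstr var varsort index bindex opsym :=
  if h : ∃ B, PSubstAbsRel A ρ B then h.choose else A

/-- A freshness-substitution (FS) model. -/
structure FSModel (var varsort index bindex opsym : Type u) : Type (u + 1) where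
  T : Type u
  A : Type u
  VAR : varsort → var → T
  OP : opsym → Input index T → Input bindex A → T
  ABS : varsort → var → T → A
  FRESH : varsort → var → T → Prop
  FRESHABS : varsort → var → A → Prop
  SUBST : T → T → var → varsort → T
  SUBSTABS : A → T → var → varsort → A
  -- (i) the freshness implication rules
  fresh_var : ∀ ys y xs x, (ys, y) ≠ (xs, x) → FRESH ys y (VAR xs x)
  fresh_op : ∀ ys y d inp binp, (∀ i t, inp i = some t → FRESH ys y t) →
    (∀ j a, binp j = some a → FRESHABS ys y a) → FRESH ys y (OP d inp binp)
  fresh_abs : ∀ ys y xs x t, ((ys, y) = (xs, x) ∨ FRESH ys y t) →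
    FRESHABS ys y (ABS xs x t)
  -- (ii) the substitution simplification rules
  subst_var_eq : ∀ ys y Y, SUBST (VAR ys y) Y y ys = Y
  subst_var_ne : ∀ xs x Y y ys, (xs, x) ≠ (ys, y) → SUBST (VAR xs x) Y y ys = VAR xs x
  subst_op : ∀ d inp binp Y y ys,
    SUBST (OP d inp binp) Y y ys =
      OP d (liftF (fun t => SUBST t Y y ys) inp) (liftF (fun a => SUBSTABS a Y y ys) binp)
  subst_abs : ∀ xs x t Y y ys, (xs, x) ≠ (ys, y) → FRESH xs x Y →
    SUBSTABS (ABS xs x t) Y y ys = ABS xs x (SUBST t Y y ys)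
  -- (iii) the substitution-based abstraction-equality rules
  abs_cong : ∀ xs x x' y t t', y ∉ ({x, x'} : Set var) → FRESH xs y t →
    FRESH xs y t' → SUBST t (VAR xs y) x xs = SUBST t' (VAR xs y) x' xs →
    ABS xs x t = ABS xs x' t'
  abs_rename : ∀ xs x y t, FRESH xs y t → ABS xs x t = ABS xs y (SUBST t (VAR xs y) x xs)

/-- The commutation and preservation properties of a morphism from the term model
to an FS model (required to hold on good items). -/
def IsFSMorphism (M : FSModel var varsort index bindex opsym)
    (f : Term var varsort index bindex opsym → M.T) (fAbs : Abstr var varsort index bindex opsym → M.A) : Prop :=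
  (∀ xs x, f (Var xs x) = M.VAR xs x) ∧
  (∀ d inp binp, liftP good inp → liftP goodAbs binp →
    smallDom var inp → smallDom var binp →
    f (Op d inp binp) = M.OP d (liftF f inp) (liftF fAbs binp)) ∧
  (∀ xs x X, good X → fAbs (Abs xs x X) = M.ABS xs x (f X)) ∧
  (∀ X Y y ys, good X → good Y → f (subst X Y y ys) = M.SUBST (f X) (f Y) y ys) ∧
  (∀ A Y y ys, goodAbs A → good Y →
    fAbs (substAbs A Y y ys) = M.SUBSTABS (fAbs A) (f Y) y ys) ∧
  (∀ xs x X, good X → fresh xs x X → M.FRESH xs x (f X)) ∧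
  (∀ xs x A, goodAbs A → freshAbs xs x A → M.FRESHABS xs x (fAbs A))

/-!
Quasiterms are the free algebra on the constructors, so they have a unique interpretation in every
FS model. The point is that the interpretation respects alpha-equivalence. Swapping `x` with a
fresh `y` is interpreted by the substitution of `VAR y` for `x`: at a binder, one first renames
the bound variable to a fresh one in the model, by the second abstraction-equality rule, and then
moves the substitution under the binder. With this, the exists-fresh clause of alpha-equivalence
becomes precisely the premise of the first abstraction-equality rule.

On the syntactic side, sort-indexed families of permutations act on quasiterms by renaming all
variables, and two families that agree on the free variables of a good quasiterm send it to
alpha-equivalent results; transitivity of alpha-equivalence, as well as the totality of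
substitution on good terms, follows. Fresh variables exist because `|var|` is regular: the
variables occurring in a good quasiterm are fewer than `|var|`, so each finite list of freshness
conditions holds for all but fewer than `|var|` variables.
-/

/-! ### Componentwise liftings -/

section Inputs

variable {α β γ δ : Type u} {inp : Input α β} {inp' : Input α γ}

theorem liftP_liftF {f : β → γ} {P : γ → Prop} :
    liftP P (liftF f inp) ↔ liftP (fun b => P (f b)) inp :=
  forall_congr' fun a => by cases h : inp a <;> simp [liftF, h]

theorem liftP_congr {P Q : β → Prop} (h : liftP (fun b => P b ↔ Q b) inp) :
    liftP P inp ↔ liftP Q inp :=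
  forall₂_congr fun a b => imp_congr_right (h a b)

theorem liftF_liftF (f : β → γ) (g : γ → δ) (inp : Input α β) :
    liftF g (liftF f inp) = liftF (fun b => g (f b)) inp :=
  funext fun _ => Option.map_map ..

theorem liftF_id (inp : Input α β) : liftF id inp = inp :=
  funext fun _ => Option.map_id_apply

/-- The componentwise lifting of a relation to inputs: equal domains and related values. -/
def liftR (R : β → γ → Prop) (inp : Input α β) (inp' : Input α γ) : Prop :=
  ∀ a, Option.Rel R (inp a) (inp' a)

theorem liftR_iff {R : β → γ → Prop} :
    liftR R inp inp' ↔ (∀ a, inp a = none ↔ inp' a = none) ∧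
      ∀ a b c, inp a = some b → inp' a = some c → R b c := by
  rw [liftR, ← forall_and]
  refine forall_congr' fun a => ?_
  cases inp a <;> cases inp' a <;> simp

theorem liftR_self {R : β → β → Prop} : liftR R inp inp ↔ liftP (fun b => R b b) inp :=
  forall_congr' fun a => by cases inp a <;> simp

theorem liftR_liftF_left {f : β → δ} {R : δ → γ → Prop} :
    liftR R (liftF f inp) inp' ↔ liftR (fun b c => R (f b) c) inp inp' :=
  forall_congr' fun a => by cases h : inp a <;> cases h' : inp' a <;> simp [liftF, h]

theorem liftR_liftF_right {f : γ → δ} {R : β → δ → Prop} :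
    liftR R inp (liftF f inp') ↔ liftR (fun b c => R b (f c)) inp inp' :=
  forall_congr' fun a => by cases h : inp a <;> cases h' : inp' a <;> simp [liftF, h']

theorem liftF_eq_liftF_iff {f : β → δ} {g : γ → δ} :
    liftF f inp = liftF g inp' ↔ liftR (fun b c => f b = g c) inp inp' := by
  rw [funext_iff]
  exact forall_congr' fun a => by cases h : inp a <;> cases h' : inp' a <;> simp [liftF, h, h']

theorem liftF_congr {f g : β → γ} (h : liftP (fun b => f b = g b) inp) :
    liftF f inp = liftF g inp :=
  liftF_eq_liftF_iff.2 (liftR_self.2 h)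

theorem liftR_flip {R : β → γ → Prop} : liftR (flip R) inp' inp ↔ liftR R inp inp' :=
  forall_congr' fun a => by cases inp a <;> cases inp' a <;> simp [flip]

theorem liftR.imp {R S : β → γ → Prop} (h : liftR R inp inp')
    (hRS : liftP (fun b => ∀ c, R b c → S b c) inp) : liftR S inp inp' :=
  liftR_iff.2 ⟨(liftR_iff.1 h).1, fun a b c hb hc =>
    hRS a b hb c ((liftR_iff.1 h).2 a b c hb hc)⟩

theorem liftR.liftP {P : β → Prop} {Q : γ → Prop} (h : liftR (fun b c => P b → Q c) inp inp')
    (hP : liftP P inp) : liftP Q inp' := by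
  intro a c hc
  obtain ⟨hdom, hval⟩ := liftR_iff.1 h
  obtain ⟨b, hb⟩ := Option.ne_none_iff_exists'.1 (mt (hdom a).1 (by simp [hc]))
  exact hval a b c hb hc (hP a b hb)

theorem liftR_comp {R : β → γ → Prop} {S : γ → δ → Prop} {inp'' : Input α δ} :
    liftR (Relation.Comp R S) inp inp'' ↔
      ∃ inp' : Input α γ, liftR R inp inp' ∧ liftR S inp' inp'' := by
  simp only [liftR, ← forall_and]
  rw [← Classical.skolem (p := fun a o => Option.Rel R (inp a) o ∧ Option.Rel S o (inp'' a))]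
  refine forall_congr' fun a => ?_
  cases inp a <;> cases inp'' a <;> simp [Option.exists, Relation.Comp]

theorem exists_liftR {R : β → γ → Prop} (h : liftP (fun b => ∃ c, R b c) inp) :
    ∃ inp' : Input α γ, liftR R inp inp' := by
  refine Classical.skolem.1 fun a => ?_
  cases hb : inp a with
  | none => exact ⟨none, .none⟩
  | some b => exact (h a b hb).imp' some fun _ => .some

theorem smallDom_liftF {f : β → γ} : smallDom var (liftF f inp) ↔ smallDom var inp := by
  simp only [smallDom, idom, liftF, ne_eq, Option.map_eq_none_iff]

theorem liftR.smallDom {R : β → γ → Prop} (h : liftR R inp inp') (hs : smallDom var inp) :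
    smallDom var inp' := by
  simpa only [_root_.smallDom, idom, ne_eq, (liftR_iff.1 h).1] using hs

end Inputs

section Quasiterms

variable {X Y Z : QTerm var varsort index bindex opsym}
  {A A' : QAbs var varsort index bindex opsym}
  {inp : Input index (QTerm var varsort index bindex opsym)}
  {binp : Input bindex (QAbs var varsort index bindex opsym)}
  {d : opsym} {xs ys zs : varsort} {x y z : var}

/-! ### Induction and recursion on quasiterms -/

theorem QTerm.induction {P : QTerm var varsort index bindex opsym → Prop}
    {Q : QAbs var varsort index bindex opsym → Prop}
    (qVar : ∀ xs x, P (.qVar xs x))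
    (qOp : ∀ d inp binp, liftP P inp → liftP Q binp → P (.qOp d inp binp))
    (qAbs : ∀ xs x X, P X → Q (.qAbs xs x X)) : (∀ X, P X) ∧ (∀ A, Q A) := by
  have hP : ∀ X, P X := QTerm.rec (motive_2 := Q) (motive_3 := fun o => ∀ X, o = some X → P X)
    (motive_4 := fun o => ∀ A, o = some A → Q A) qVar qOp qAbs
    nofun (by rintro X hX _ ⟨⟩; exact hX) nofun (by rintro A hA _ ⟨⟩; exact hA)
  exact ⟨hP, fun | .qAbs xs x X => qAbs xs x X (hP X)⟩

section Fold

variable {T S : Type u} (var' : varsort → var → T) (op : opsym → Input index T → Input bindex S → T)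
  (abs : varsort → var → T → S)

/-- The structural recursor on quasiterms into an arbitrary algebra, with values for
quasiterms in `T` and for quasiabstractions in `S`. -/
noncomputable def QTerm.fold : QTerm var varsort index bindex opsym → T :=
  QTerm.rec (motive_1 := fun _ => T) (motive_2 := fun _ => S)
    (motive_3 := fun _ => Option T) (motive_4 := fun _ => Option S)
    var' (fun d _ _ => op d) (fun xs x _ => abs xs x)
    none (fun _ => some) none (fun _ => some)

/-- The companion of `QTerm.fold` on quasiabstractions. -/
noncomputable def QAbs.fold : QAbs var varsort index bindex opsym → S
  | .qAbs xs x X => abs xs x (X.fold var' op abs)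

theorem QTerm.fold_qOp : (QTerm.qOp d inp binp).fold var' op abs =
    op d (liftF (QTerm.fold var' op abs) inp) (liftF (QAbs.fold var' op abs) binp) := by
  unfold QTerm.fold
  dsimp only
  congr 1
  · funext i; simp only [liftF]; cases inp i <;> rfl
  · funext j; simp only [liftF]; rcases binp j with _ | ⟨xs, x, X⟩ <;> rfl

end Fold

/-! ### Permutations of variables -/

/-- A sort-indexed family of permutations of the variables acts on quasiterms by renaming all
variables, including the bound ones. -/
noncomputable instance : SMul (varsort → Equiv.Perm var) (QTerm var varsort index bindex opsym) :=
  ⟨fun p => QTerm.fold (fun xs x => .qVar xs (p xs x)) .qOp fun xs x => .qAbs xs (p xs x)⟩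

noncomputable instance : SMul (varsort → Equiv.Perm var) (QAbs var varsort index bindex opsym) :=
  ⟨fun p => QAbs.fold (fun xs x => .qVar xs (p xs x)) .qOp fun xs x => .qAbs xs (p xs x)⟩

variable {p : varsort → Equiv.Perm var}

theorem smul_qVar : p • (.qVar xs x : QTerm var varsort index bindex opsym) =
    .qVar xs (p xs x) :=
  rfl

theorem smul_qOp : p • QTerm.qOp d inp binp =
    .qOp d (liftF (p • ·) inp) (liftF (p • ·) binp) :=
  QTerm.fold_qOp ..

theorem smul_qAbs : p • QAbs.qAbs xs x X = .qAbs xs (p xs x) (p • X) :=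
  rfl

theorem one_perm_smul : (∀ X : QTerm var varsort index bindex opsym,
    (1 : varsort → Equiv.Perm var) • X = X) ∧
    ∀ A : QAbs var varsort index bindex opsym, (1 : varsort → Equiv.Perm var) • A = A := by
  refine QTerm.induction (fun _ _ => rfl) (fun d inp binp hinp hbinp => ?_)
    fun xs x X ih => congrArg (QAbs.qAbs xs x) ih
  rw [smul_qOp, liftF_congr (g := id) hinp, liftF_congr (g := id) hbinp, liftF_id, liftF_id]

theorem mul_perm_smul (p q : varsort → Equiv.Perm var) :
    (∀ X : QTerm var varsort index bindex opsym, (p * q) • X = p • q • X) ∧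
    ∀ A : QAbs var varsort index bindex opsym, (p * q) • A = p • q • A := by
  refine QTerm.induction (fun _ _ => rfl) (fun d inp binp hinp hbinp => ?_)
    fun xs x X ih => congrArg (QAbs.qAbs xs _) ih
  simp only [smul_qOp, liftF_liftF, liftF_congr hinp, liftF_congr hbinp]

noncomputable instance :
    MulAction (varsort → Equiv.Perm var) (QTerm var varsort index bindex opsym) where
  one_smul := one_perm_smul.1
  mul_smul p q := (mul_perm_smul p q).1

noncomputable instance :
    MulAction (varsort → Equiv.Perm var) (QAbs var varsort index bindex opsym) where
  one_smul := one_perm_smul.2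
  mul_smul p q := (mul_perm_smul p q).2

/-- The transposition of `y` and `z` at the sort `zs`, as a family of permutations; it acts on
quasiterms as `qSwap y z zs`. -/
noncomputable def sortSwap (zs : varsort) (y z : var) : varsort → Equiv.Perm var :=
  Pi.mulSingle zs (Equiv.swap y z)

theorem sortSwap_apply : sortSwap zs y z xs x = swapVarS var varsort zs xs y z x := by
  by_cases h : xs = zs
  · subst h; simp [sortSwap, swapVarS, swapVar, Equiv.swap_apply_def]
  · simp [sortSwap, swapVarS, h]

theorem sortSwap_right : sortSwap zs y z zs z = y := by
  simp [sortSwap]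

theorem sortSwap_of_ne (hy : (xs, x) ≠ (zs, y)) (hz : (xs, x) ≠ (zs, z)) :
    sortSwap zs y z xs x = x := by
  grind [sortSwap_apply, swapVarS, swapVar]

theorem sortSwap_mul_self : sortSwap zs y z * sortSwap zs y z = 1 := by
  rw [sortSwap, ← Pi.mulSingle_mul, Equiv.swap_mul_self, Pi.mulSingle_one]

theorem mul_sortSwap (p : varsort → Equiv.Perm var) :
    p * sortSwap zs y z = sortSwap zs (p zs y) (p zs z) * p := by
  ext xs x
  by_cases h : xs = zs
  · subst h
    simp [sortSwap, Equiv.swap_apply_apply]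
  · simp [sortSwap, h]

theorem smul_sortSwap_smul (p : varsort → Equiv.Perm var)
    (X : QTerm var varsort index bindex opsym) :
    p • sortSwap zs y z • X = sortSwap zs (p zs y) (p zs z) • p • X := by
  rw [smul_smul, mul_sortSwap, mul_smul]

theorem qSwap_eq_smul (X : QTerm var varsort index bindex opsym) :
    qSwap y z zs X = sortSwap zs y z • X := by
  change _ = QTerm.fold _ _ _ X
  simp only [qSwap, QTerm.fold, sortSwap_apply]

/-! ### Freshness and goodness -/

theorem qFresh_qVar :
    QFresh ys y (.qVar xs x : QTerm var varsort index bindex opsym) ↔ (ys, y) ≠ (xs, x) :=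
  ⟨fun | .qVar h => h, .qVar⟩

theorem qFresh_qOp :
    QFresh ys y (.qOp d inp binp) ↔ liftP (QFresh ys y) inp ∧ liftP (QFreshAbs ys y) binp :=
  ⟨fun | .qOp h h' => ⟨h, h'⟩, fun h => .qOp h.1 h.2⟩

theorem qFreshAbs_qAbs : QFreshAbs ys y (.qAbs xs x X) ↔ (ys, y) = (xs, x) ∨ QFresh ys y X :=
  ⟨fun | .qAbs_bound => .inl rfl | .qAbs_body h => .inr h,
    fun | .inl rfl => .qAbs_bound | .inr h => .qAbs_body h⟩

theorem qGood_qOp : QGood (.qOp d inp binp) ↔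
    liftP QGood inp ∧ liftP QGoodAbs binp ∧ smallDom var inp ∧ smallDom var binp :=
  ⟨fun | .qOp h h' hs hs' => ⟨h, h', hs, hs'⟩, fun ⟨h, h', hs, hs'⟩ => .qOp h h' hs hs'⟩

theorem qGoodAbs_qAbs : QGoodAbs (.qAbs xs x X) ↔ QGood X :=
  ⟨fun | .qAbs h => h, .qAbs⟩

theorem qFresh_smul_iff (p : varsort → Equiv.Perm var) (ys : varsort) (y : var) :
    (∀ X : QTerm var varsort index bindex opsym,
      QFresh ys (p ys y) (p • X) ↔ QFresh ys y X) ∧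
    ∀ A : QAbs var varsort index bindex opsym,
      QFreshAbs ys (p ys y) (p • A) ↔ QFreshAbs ys y A := by
  have apply_eq_iff (xs x) : (ys, p ys y) = (xs, p xs x) ↔ (ys, y) = (xs, x) := by
    simp +contextual [Prod.ext_iff]
  refine QTerm.induction (fun xs x => ?_) (fun d inp binp hinp hbinp => ?_) fun xs x X ih => ?_
  · simp only [smul_qVar, qFresh_qVar, ne_eq, apply_eq_iff]
  · simp only [smul_qOp, qFresh_qOp, liftP_liftF, liftP_congr hinp, liftP_congr hbinp]
  · simp only [smul_qAbs, qFreshAbs_qAbs, apply_eq_iff, ih]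

theorem sortSwap_apply_of_qFresh_smul {v : var} (hv : QFresh xs v (p • X)) (hy : ¬QFresh ys y X)
    (hne : (ys, y) ≠ (xs, x)) : sortSwap xs v (p xs x) ys (p ys y) = p ys y := by
  refine sortSwap_of_ne ?_ ?_
  · rintro ⟨⟩
    exact hy ((qFresh_smul_iff p _ y).1 X |>.1 hv)
  · grind [Equiv.apply_eq_iff_eq]

theorem QFreshAbs.sortSwap_smul {w : var} (hy : QFreshAbs ys y (.qAbs zs z X))
    (hw : QFresh zs w X) (hne : (ys, y) ≠ (zs, w)) : QFresh ys y (sortSwap zs w z • X) := by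
  rw [← (qFresh_smul_iff (sortSwap zs w z) ys y).1, smul_smul, sortSwap_mul_self, one_smul]
  by_cases hyz : (ys, y) = (zs, z)
  · cases hyz
    rwa [sortSwap_right]
  · rw [sortSwap_of_ne hne hyz]
    exact (qFreshAbs_qAbs.1 hy).resolve_left hyz

theorem qGood_smul_iff (p : varsort → Equiv.Perm var) :
    (∀ X : QTerm var varsort index bindex opsym, QGood (p • X) ↔ QGood X) ∧
    ∀ A : QAbs var varsort index bindex opsym, QGoodAbs (p • A) ↔ QGoodAbs A := by
  refine QTerm.induction (fun xs x => ?_) (fun d inp binp hinp hbinp => ?_) fun xs x X ih => ?_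
  · exact iff_of_true .qVar .qVar
  · simp only [smul_qOp, qGood_qOp, liftP_liftF, liftP_congr hinp, liftP_congr hbinp,
      smallDom_liftF]
  · simp only [smul_qAbs, qGoodAbs_qAbs, ih]

/- The bodies of abstractions get renamed, so the hypothesis on an abstraction must cover all
renamings of its body. -/
theorem QGood.perm_induction {P : QTerm var varsort index bindex opsym → Prop}
    {Q : QAbs var varsort index bindex opsym → Prop}
    (qVar : ∀ xs x, P (.qVar xs x))
    (qOp : ∀ d inp binp, QGood (.qOp d inp binp) → liftP P inp → liftP Q binp →
      P (.qOp d inp binp))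
    (qAbs : ∀ xs x X, QGood X → (∀ p : varsort → Equiv.Perm var, P (p • X)) →
      Q (.qAbs xs x X)) :
    (∀ X, QGood X → P X) ∧ ∀ A, QGoodAbs A → Q A := by
  have key : (∀ X, QGood X → ∀ p : varsort → Equiv.Perm var, P (p • X)) ∧
      ∀ A, QGoodAbs A → ∀ p : varsort → Equiv.Perm var, Q (p • A) := by
    refine QTerm.induction (fun xs x _ p => qVar xs (p xs x))
      (fun d inp binp hinp hbinp h p => ?_) fun xs x X ih h p => ?_
    · have hp := (qGood_smul_iff p).1 _ |>.2 h
      rw [smul_qOp] at hp ⊢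
      obtain ⟨hg, hg', -⟩ := qGood_qOp.1 h
      exact qOp _ _ _ hp (liftP_liftF.2 fun i X hX => hinp i X hX (hg i X hX) p)
        (liftP_liftF.2 fun j A hA => hbinp j A hA (hg' j A hA) p)
    · rw [qGoodAbs_qAbs] at h
      rw [smul_qAbs]
      refine qAbs _ _ _ ((qGood_smul_iff p).1 X |>.2 h) fun p' => ?_
      rw [smul_smul]
      exact ih h _
  exact ⟨fun X h => by simpa using key.1 X h 1, fun A h => by simpa using key.2 A h 1⟩

theorem QGood.induction {P : QTerm var varsort index bindex opsym → Prop}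
    {Q : QAbs var varsort index bindex opsym → Prop}
    (qVar : ∀ xs x, P (.qVar xs x))
    (qOp : ∀ d inp binp, QGood (.qOp d inp binp) → liftP P inp → liftP Q binp →
      P (.qOp d inp binp))
    (qAbs : ∀ xs x X, QGood X → P X → Q (.qAbs xs x X)) :
    (∀ X, QGood X → P X) ∧ ∀ A, QGoodAbs A → Q A :=
  QGood.perm_induction qVar qOp fun xs x X hX h => qAbs xs x X hX (by simpa using h 1)

/-! ### Alpha-equivalence -/

theorem alpha_qOp_left : Alpha (.qOp d inp binp) Y ↔
    ∃ inp' binp', Y = .qOp d inp' binp' ∧ liftR Alpha inp inp' ∧ liftR AlphaAbs binp binp' := by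
  constructor
  · rintro (_ | ⟨h₁, h₂, h₃, h₄⟩)
    exact ⟨_, _, rfl, liftR_iff.2 ⟨h₁, h₂⟩, liftR_iff.2 ⟨h₃, h₄⟩⟩
  · rintro ⟨inp', binp', rfl, h, h'⟩
    rw [liftR_iff] at h h'
    exact .qOp h.1 h.2 h'.1 h'.2

theorem alphaAbs_qAbs_left : AlphaAbs (.qAbs xs x X) A ↔
    ∃ x' X', A = .qAbs xs x' X' ∧ ∃ y, y ≠ x ∧ y ≠ x' ∧ QFresh xs y X ∧ QFresh xs y X' ∧
      Alpha (sortSwap xs y x • X) (sortSwap xs y x' • X') := by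
  simp only [← qSwap_eq_smul]
  constructor
  · rintro ⟨hy, hX, hX', h⟩
    exact ⟨_, _, rfl, _, fun h => hy (.inl h), fun h => hy (.inr h), hX, hX', h⟩
  · rintro ⟨x', X', rfl, y, hx, hx', hX, hX', h⟩
    exact .qAbs (by simp [hx, hx']) hX hX' h

theorem Alpha.induction {P : QTerm var varsort index bindex opsym →
      QTerm var varsort index bindex opsym → Prop}
    {Q : QAbs var varsort index bindex opsym → QAbs var varsort index bindex opsym → Prop}
    (qVar : ∀ xs x, P (.qVar xs x) (.qVar xs x))
    (qOp : ∀ d inp binp inp' binp', liftR P inp inp' → liftR Q binp binp' →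
      P (.qOp d inp binp) (.qOp d inp' binp'))
    (qAbs : ∀ xs x x' X X' y, y ≠ x → y ≠ x' → QFresh xs y X → QFresh xs y X' →
      Alpha (sortSwap xs y x • X) (sortSwap xs y x' • X') →
      P (sortSwap xs y x • X) (sortSwap xs y x' • X') → Q (.qAbs xs x X) (.qAbs xs x' X')) :
    (∀ {X X'}, Alpha X X' → P X X') ∧ ∀ {A A'}, AlphaAbs A A' → Q A A' := by
  have op {d inp binp inp' binp'} (h₁ : ∀ i, inp i = none ↔ inp' i = none)
      (_ : ∀ i X X', inp i = some X → inp' i = some X' → Alpha X X')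
      (h₂ : ∀ j, binp j = none ↔ binp' j = none)
      (_ : ∀ j A A', binp j = some A → binp' j = some A' → AlphaAbs A A')
      (hP : ∀ i X X', inp i = some X → inp' i = some X' → P X X')
      (hQ : ∀ j A A', binp j = some A → binp' j = some A' → Q A A') :
      P (.qOp d inp binp) (.qOp d inp' binp') :=
    qOp _ _ _ _ _ (liftR_iff.2 ⟨h₁, hP⟩) (liftR_iff.2 ⟨h₂, hQ⟩)
  have abs {xs x x' X X'} {y : var} (hy : y ∉ ({x, x'} : Set var)) (hX : QFresh xs y X)
      (hX' : QFresh xs y X') (h : Alpha (qSwap y x xs X) (qSwap y x' xs X'))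
      (hP : P (qSwap y x xs X) (qSwap y x' xs X')) : Q (.qAbs xs x X) (.qAbs xs x' X') := by
    rw [qSwap_eq_smul, qSwap_eq_smul] at h hP
    exact qAbs _ _ _ _ _ y (fun h => hy (.inl h)) (fun h => hy (.inr h)) hX hX' h hP
  exact ⟨fun h => Alpha.rec (motive_1 := fun X X' _ => P X X') (motive_2 := fun A A' _ => Q A A')
      (qVar _ _) op abs h,
    fun h => AlphaAbs.rec (motive_1 := fun X X' _ => P X X') (motive_2 := fun A A' _ => Q A A')
      (qVar _ _) op abs h⟩

theorem alpha_symm :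
    (∀ {X Y : QTerm var varsort index bindex opsym}, Alpha X Y → Alpha Y X) ∧
    ∀ {A B : QAbs var varsort index bindex opsym}, AlphaAbs A B → AlphaAbs B A := by
  refine Alpha.induction (fun _ _ => .qVar) (fun d inp binp inp' binp' hinp hbinp => ?_)
    fun xs x x' X X' y hx hx' hX hX' _ ih => ?_
  · exact alpha_qOp_left.2 ⟨_, _, rfl, liftR_flip.2 hinp, liftR_flip.2 hbinp⟩
  · exact alphaAbs_qAbs_left.2 ⟨_, _, rfl, y, hx', hx, hX', hX, ih⟩

theorem qGood_of_alpha :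
    (∀ {X Y : QTerm var varsort index bindex opsym}, Alpha X Y → QGood X → QGood Y) ∧
    ∀ {A B : QAbs var varsort index bindex opsym}, AlphaAbs A B → QGoodAbs A → QGoodAbs B := by
  refine Alpha.induction (fun _ _ => id) (fun d inp binp inp' binp' hinp hbinp h => ?_)
    fun xs x x' X X' y _ _ _ _ _ ih => ?_
  · obtain ⟨hg, hg', hs, hs'⟩ := qGood_qOp.1 h
    exact qGood_qOp.2 ⟨hinp.liftP hg, hbinp.liftP hg', hinp.smallDom hs, hbinp.smallDom hs'⟩
  · simpa only [(qGood_smul_iff _).1, qGoodAbs_qAbs] using ih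

theorem alpha_smul (p : varsort → Equiv.Perm var) :
    (∀ {X Y : QTerm var varsort index bindex opsym}, Alpha X Y → Alpha (p • X) (p • Y)) ∧
    ∀ {A B : QAbs var varsort index bindex opsym}, AlphaAbs A B → AlphaAbs (p • A) (p • B) := by
  refine Alpha.induction (fun _ _ => .qVar) (fun d inp binp inp' binp' hinp hbinp => ?_)
    fun xs x x' X X' y hx hx' hX hX' _ ih => ?_
  · rw [smul_qOp, smul_qOp]
    exact alpha_qOp_left.2 ⟨_, _, rfl, liftR_liftF_left.2 (liftR_liftF_right.2 hinp),
      liftR_liftF_left.2 (liftR_liftF_right.2 hbinp)⟩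
  · rw [smul_qAbs, smul_qAbs]
    refine alphaAbs_qAbs_left.2 ⟨_, _, rfl, p xs y, by simpa, by simpa,
      (qFresh_smul_iff p xs y).1 X |>.2 hX, (qFresh_smul_iff p xs y).1 X' |>.2 hX', ?_⟩
    rwa [← smul_sortSwap_smul, ← smul_sortSwap_smul]

/-! ### Substitution and goodness -/

mutual

theorem QSubst.qGood {X Z : QTerm var varsort index bindex opsym} :
    QSubst X Y y ys Z → QGood Y → QGood X → QGood Z
  | .var_eq, hY, _ => hY
  | .var_ne _, _, hX => hX
  | .op h₁ h₂ h₃ h₄, hY, .qOp hinp hbinp hs hs' => by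
    have hR := liftR_iff.2 ⟨h₁, fun i X Z hX hZ => (h₂ i X Z hX hZ).qGood hY⟩
    have hR' := liftR_iff.2 ⟨h₃, fun j A B hA hB => (h₄ j A B hA hB).qGoodAbs hY⟩
    exact qGood_qOp.2 ⟨hR.liftP hinp, hR'.liftP hbinp, hR.smallDom hs, hR'.smallDom hs'⟩

theorem QSubstAbs.qGoodAbs {A B : QAbs var varsort index bindex opsym} :
    QSubstAbs A Y y ys B → QGood Y → QGoodAbs A → QGoodAbs B
  | .abs _ _ h, hY, .qAbs hX => .qAbs (h.qGood hY hX)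

end

/-! ### Good terms and good abstractions -/

theorem tmk_trep (X : Term var varsort index bindex opsym) : tmk (trep X) = X :=
  Quot.out_eq X

theorem amk_arep (A : Abstr var varsort index bindex opsym) : amk (arep A) = A :=
  Quot.out_eq A

theorem good_tmk : good (tmk X) ↔ QGood X :=
  iff_of_eq <| congrArg
    (Quot.lift QGood fun _ _ h => propext ⟨qGood_of_alpha.1 h, qGood_of_alpha.1 (alpha_symm.1 h)⟩)
    (tmk_trep (tmk X))

theorem goodAbs_amk : goodAbs (amk A) ↔ QGoodAbs A :=
  iff_of_eq <| congrArg
    (Quot.lift QGoodAbs fun _ _ h =>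
      propext ⟨qGood_of_alpha.2 h, qGood_of_alpha.2 (alpha_symm.2 h)⟩)
    (amk_arep (amk A))

/-! ### Interpretation in an FS model -/

namespace FSModel

variable (M : FSModel var varsort index bindex opsym)

/-- The interpretation of quasiterms in the model `M`. -/
noncomputable def interp : QTerm var varsort index bindex opsym → M.T :=
  QTerm.fold M.VAR M.OP M.ABS

/-- The interpretation of quasiabstractions in the model `M`. -/
noncomputable def interpAbs : QAbs var varsort index bindex opsym → M.A :=
  QAbs.fold M.VAR M.OP M.ABS

theorem interp_qOp : M.interp (.qOp d inp binp) =
    M.OP d (liftF M.interp inp) (liftF M.interpAbs binp) :=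
  QTerm.fold_qOp ..

theorem interpAbs_qAbs : M.interpAbs (.qAbs xs x X) = M.ABS xs x (M.interp X) :=
  rfl

theorem fresh_interp (ys : varsort) (y : var) :
    (∀ X, QFresh ys y X → M.FRESH ys y (M.interp X)) ∧
    ∀ A, QFreshAbs ys y A → M.FRESHABS ys y (M.interpAbs A) := by
  refine QTerm.induction (fun xs x h => ?_) (fun d inp binp hinp hbinp h => ?_)
    fun xs x X ih h => ?_
  · exact M.fresh_var _ _ _ _ (qFresh_qVar.1 h)
  · obtain ⟨h, h'⟩ := qFresh_qOp.1 h
    rw [interp_qOp]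
    exact M.fresh_op _ _ _ _ _ (liftP_liftF.2 fun i X hX => hinp i X hX (h i X hX))
      (liftP_liftF.2 fun j A hA => hbinp j A hA (h' j A hA))
  · exact M.fresh_abs _ _ _ _ _ ((qFreshAbs_qAbs.1 h).imp_right ih)

mutual

theorem interp_of_qSubst {X Z : QTerm var varsort index bindex opsym} : QSubst X Y y ys Z →
    M.interp Z = M.SUBST (M.interp X) (M.interp Y) y ys
  | .var_eq => (M.subst_var_eq _ _ _).symm
  | .var_ne h => (M.subst_var_ne _ _ _ _ _ h).symm
  | .op h₁ h₂ h₃ h₄ => by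
    rw [interp_qOp, interp_qOp, M.subst_op, liftF_liftF, liftF_liftF,
      liftF_eq_liftF_iff.2 (liftR_flip.1 (liftR_iff.2
        ⟨h₁, fun i X Z hX hZ => interp_of_qSubst (h₂ i X Z hX hZ)⟩)),
      liftF_eq_liftF_iff.2 (liftR_flip.1 (liftR_iff.2
        ⟨h₃, fun j A B hA hB => interpAbs_of_qSubstAbs (h₄ j A B hA hB)⟩))]

theorem interpAbs_of_qSubstAbs {A B : QAbs var varsort index bindex opsym} :
    QSubstAbs A Y y ys B → M.interpAbs B = M.SUBSTABS (M.interpAbs A) (M.interp Y) y ys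
  | .abs h hx hX =>
    (congrArg (M.ABS _ _) (interp_of_qSubst hX)).trans
      (M.subst_abs _ _ _ _ _ _ h ((M.fresh_interp _ _).1 _ hx)).symm

end

end FSModel

section Regular

variable [hreg : Fact (Cardinal.mk var).IsRegular]

/-! ### Existence of fresh variables -/

variable (var) in
/-- The filter of the sets of variables whose complement has cardinality less than `|var|`; a
property that holds eventually along it holds for some variable. -/
abbrev mostVars : Filter var := Filter.cocardinal var hreg.out

instance : (mostVars var).NeBot :=
  ⟨Filter.empty_mem_iff_bot.not.1 (by simp)⟩

theorem eventually_liftP {α β : Type u} {inp : Input α β} {P : var → β → Prop}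
    (hs : smallDom var inp) (h : liftP (fun b => ∀ᶠ y in mostVars var, P y b) inp) :
    ∀ᶠ y in mostVars var, liftP (P y) inp := by
  have : ∀ᶠ y in mostVars var, ∀ a ∈ idom inp, ∀ b, inp a = some b → P y b := by
    refine (Filter.eventually_cardinal_ball hs).2 fun a ha => ?_
    obtain ⟨b, hb⟩ := Option.ne_none_iff_exists'.1 ha
    exact (h a b hb).mono fun y hy c hc => by grind
  exact this.mono fun y hy a b hb => hy a (by simp [idom, hb]) b hb

theorem eventually_qFresh_and_qFreshAbs (ys : varsort) :
    (∀ X : QTerm var varsort index bindex opsym, QGood X →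
      ∀ᶠ y in mostVars var, QFresh ys y X) ∧
    ∀ A : QAbs var varsort index bindex opsym, QGoodAbs A →
      ∀ᶠ y in mostVars var, QFreshAbs ys y A := by
  refine QGood.induction (fun xs x => ?_) (fun d inp binp hgood hinp hbinp => ?_)
    fun xs x X _ ih => ?_
  · exact (Filter.eventually_cocardinal_ne x).mono fun y hy => .qVar (by simp [hy])
  · obtain ⟨-, -, hs, hs'⟩ := qGood_qOp.1 hgood
    exact ((eventually_liftP hs hinp).and (eventually_liftP hs' hbinp)).mono
      fun y hy => qFresh_qOp.2 hy
  · exact ih.mono fun y hy => .qAbs_body hy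

theorem QGood.eventually_qFresh (hX : QGood X) (ys : varsort) :
    ∀ᶠ y in mostVars var, QFresh ys y X :=
  (eventually_qFresh_and_qFreshAbs ys).1 X hX

theorem eventually_mostVars_ne (x : var) : ∀ᶠ y in mostVars var, y ≠ x :=
  Filter.eventually_cocardinal_ne x

/-! ### Transitivity of alpha-equivalence -/

theorem alpha_smul_smul_of_agree :
    (∀ X : QTerm var varsort index bindex opsym, QGood X → ∀ p q : varsort → Equiv.Perm var,
      (∀ ys y, ¬QFresh ys y X → p ys y = q ys y) → Alpha (p • X) (q • X)) ∧
    ∀ A : QAbs var varsort index bindex opsym, QGoodAbs A → ∀ p q : varsort → Equiv.Perm var,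
      (∀ ys y, ¬QFreshAbs ys y A → p ys y = q ys y) → AlphaAbs (p • A) (q • A) := by
  refine QGood.induction (fun xs x p q h => ?_) (fun d inp binp _ hinp hbinp p q h => ?_)
    fun xs x X hX ih p q h => ?_
  · rw [smul_qVar, smul_qVar, h xs x (by simp [qFresh_qVar])]
    exact .qVar
  · rw [smul_qOp, smul_qOp]
    refine alpha_qOp_left.2 ⟨_, _, rfl, liftR_liftF_left.2 (liftR_liftF_right.2 ?_),
      liftR_liftF_left.2 (liftR_liftF_right.2 ?_)⟩
    · exact liftR_self.2 fun i X hX => hinp i X hX p q fun ys y hy =>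
        h ys y fun hop => hy ((qFresh_qOp.1 hop).1 i X hX)
    · exact liftR_self.2 fun j A hA => hbinp j A hA p q fun ys y hy =>
        h ys y fun hop => hy ((qFresh_qOp.1 hop).2 j A hA)
  · obtain ⟨v, hvp, hvq, hp, hq⟩ := ((eventually_mostVars_ne (p xs x)).and <|
      (eventually_mostVars_ne (q xs x)).and <|
      (((qGood_smul_iff p).1 X).2 hX |>.eventually_qFresh xs).and
      (((qGood_smul_iff q).1 X).2 hX |>.eventually_qFresh xs)).exists
    rw [smul_qAbs, smul_qAbs]
    refine alphaAbs_qAbs_left.2 ⟨_, _, rfl, v, hvp, hvq, hp, hq, ?_⟩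
    rw [smul_smul, smul_smul]
    refine ih _ _ fun ys y hy => ?_
    by_cases hne : (ys, y) = (xs, x)
    · cases hne
      simp [sortSwap_right]
    · rw [Pi.mul_apply, Pi.mul_apply, Equiv.Perm.mul_apply, Equiv.Perm.mul_apply,
        sortSwap_apply_of_qFresh_smul hp hy hne, sortSwap_apply_of_qFresh_smul hq hy hne]
      exact h ys y fun hA => (qFreshAbs_qAbs.1 hA).elim hne hy

theorem QGood.alpha_refl (hX : QGood X) : Alpha X X := by
  simpa using alpha_smul_smul_of_agree.1 X hX 1 1 fun _ _ _ => rfl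

theorem QGoodAbs.alpha_refl (hA : QGoodAbs A) : AlphaAbs A A := by
  simpa using alpha_smul_smul_of_agree.2 A hA 1 1 fun _ _ _ => rfl

theorem QGood.alpha_sortSwap_sortSwap (hX : QGood X) {u v : var} (hu : QFresh xs u X)
    (hv : QFresh xs v X) :
    Alpha (sortSwap xs v x • X) (sortSwap xs v u • sortSwap xs u x • X) := by
  rw [smul_smul]
  refine alpha_smul_smul_of_agree.1 X hX _ _ fun ys y hy => ?_
  simp only [Pi.mul_apply, Equiv.Perm.mul_apply, sortSwap_apply, swapVarS, swapVar]
  grind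

theorem alpha_trans :
    (∀ X : QTerm var varsort index bindex opsym, QGood X →
      ∀ Y Z, Alpha X Y → Alpha Y Z → Alpha X Z) ∧
    ∀ A : QAbs var varsort index bindex opsym, QGoodAbs A →
      ∀ B C, AlphaAbs A B → AlphaAbs B C → AlphaAbs A C := by
  refine QGood.perm_induction (fun xs x Y Z hY hZ => ?_)
    (fun d inp binp _ hinp hbinp Y Z hY hZ => ?_) fun xs x X hX ih B C hB hC => ?_
  · cases hY
    exact hZ
  · obtain ⟨inp₁, binp₁, rfl, h₁, h₁'⟩ := alpha_qOp_left.1 hY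
    obtain ⟨inp₂, binp₂, rfl, h₂, h₂'⟩ := alpha_qOp_left.1 hZ
    exact alpha_qOp_left.2 ⟨_, _, rfl,
      (liftR_comp.2 ⟨_, h₁, h₂⟩).imp fun i X hX Z ⟨Y, hY, hZ⟩ => hinp i X hX Y Z hY hZ,
      (liftR_comp.2 ⟨_, h₁', h₂'⟩).imp fun j A hA C ⟨B, hB, hC⟩ => hbinp j A hA B C hB hC⟩
  · have hgood := qGood_of_alpha.2 hB (qGoodAbs_qAbs.2 hX)
    have hgood' := qGood_of_alpha.2 hC hgood
    obtain ⟨y, Y, rfl, u, -, -, huX, huY, hXY⟩ := alphaAbs_qAbs_left.1 hB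
    obtain ⟨z, Z, rfl, w, -, -, hwY, hwZ, hYZ⟩ := alphaAbs_qAbs_left.1 hC
    rw [qGoodAbs_qAbs] at hgood hgood'
    obtain ⟨v, hvx, hvz, hvX, hvY, hvZ⟩ := ((eventually_mostVars_ne x).and <|
      (eventually_mostVars_ne z).and <| (hX.eventually_qFresh xs).and <|
      (hgood.eventually_qFresh xs).and
      (hgood'.eventually_qFresh xs)).exists
    have trans {Y Z} := ih (sortSwap xs v x) Y Z
    have toY : Alpha (sortSwap xs v x • X) (sortSwap xs v y • Y) :=
      trans (trans (hX.alpha_sortSwap_sortSwap huX hvX) ((alpha_smul _).1 hXY))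
        (alpha_symm.1 (hgood.alpha_sortSwap_sortSwap huY hvY))
    have toZ : Alpha (sortSwap xs v x • X) (sortSwap xs v z • Z) :=
      trans (trans (trans toY (hgood.alpha_sortSwap_sortSwap hwY hvY)) ((alpha_smul _).1 hYZ))
        (alpha_symm.1 (hgood'.alpha_sortSwap_sortSwap hwZ hvZ))
    exact alphaAbs_qAbs_left.2 ⟨_, _, rfl, v, hvx, hvz, hvX, hvZ, toZ⟩

theorem alphaAbs_qAbs_of_alpha (hX : QGood X) (h : Alpha X Y) :
    AlphaAbs (.qAbs xs x X) (.qAbs xs x Y) := by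
  obtain ⟨v, hv, hvX, hvY⟩ := ((eventually_mostVars_ne x).and <| (hX.eventually_qFresh xs).and
    ((qGood_of_alpha.1 h hX).eventually_qFresh xs)).exists
  exact alphaAbs_qAbs_left.2 ⟨_, _, rfl, v, hv, hv, hvX, hvY, (alpha_smul _).1 h⟩

theorem alphaAbs_rename (hX : QGood X) {w : var} (hw : QFresh xs w X) :
    AlphaAbs (.qAbs xs x X) (.qAbs xs w (sortSwap xs w x • X)) := by
  have hX' := (qGood_smul_iff (sortSwap xs w x)).1 X |>.2 hX
  obtain ⟨v, hvx, hvw, hvX, hvX'⟩ := ((eventually_mostVars_ne x).and <|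
    (eventually_mostVars_ne w).and <| (hX.eventually_qFresh xs).and
    (hX'.eventually_qFresh xs)).exists
  exact alphaAbs_qAbs_left.2
    ⟨_, _, rfl, v, hvx, hvw, hvX, hvX', hX.alpha_sortSwap_sortSwap hw hvX⟩

theorem tmk_eq_tmk_iff (hX : QGood X) : tmk X = tmk Y ↔ Alpha X Y := by
  refine ⟨fun h => ?_, Quot.sound⟩
  have invariant (Y Z) (hYZ : Alpha Y Z) : Alpha X Y = Alpha X Z :=
    propext ⟨fun h => alpha_trans.1 X hX Y Z h hYZ,
      fun h => alpha_trans.1 X hX Z Y h (alpha_symm.1 hYZ)⟩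
  exact (congrArg (Quot.lift (Alpha X) invariant) h).mp hX.alpha_refl

theorem amk_eq_amk_iff (hA : QGoodAbs A) : amk A = amk A' ↔ AlphaAbs A A' := by
  refine ⟨fun h => ?_, Quot.sound⟩
  have invariant (B C) (hBC : AlphaAbs B C) : AlphaAbs A B = AlphaAbs A C :=
    propext ⟨fun h => alpha_trans.2 A hA B C h hBC,
      fun h => alpha_trans.2 A hA C B h (alpha_symm.2 hBC)⟩
  exact (congrArg (Quot.lift (AlphaAbs A) invariant) h).mp hA.alpha_refl

theorem tmk_qOp (h : QGood (.qOp d inp binp)) :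
    tmk (.qOp d inp binp) = Op d (liftF tmk inp) (liftF amk binp) := by
  obtain ⟨hinp, hbinp, -⟩ := qGood_qOp.1 h
  rw [Op, liftF_liftF, liftF_liftF]
  exact Quot.sound (alpha_qOp_left.2 ⟨_, _, rfl,
    liftR_liftF_right.2 (liftR_self.2 fun i X hX =>
      (tmk_eq_tmk_iff (hinp i X hX)).1 (tmk_trep _).symm),
    liftR_liftF_right.2 (liftR_self.2 fun j A hA =>
      (amk_eq_amk_iff (hbinp j A hA)).1 (amk_arep _).symm)⟩)

theorem amk_qAbs (hX : QGood X) : amk (.qAbs xs x X) = Abs xs x (tmk X) :=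
  Quot.sound (alphaAbs_qAbs_of_alpha hX ((tmk_eq_tmk_iff hX).1 (tmk_trep _).symm))

theorem good_induction {P : Term var varsort index bindex opsym → Prop}
    {Q : Abstr var varsort index bindex opsym → Prop}
    (var' : ∀ xs x, P (Var xs x))
    (op : ∀ d inp binp, liftP good inp → liftP goodAbs binp → smallDom var inp →
      smallDom var binp → liftP P inp → liftP Q binp → P (Op d inp binp))
    (abs : ∀ xs x X, good X → P X → Q (Abs xs x X)) :
    (∀ X, good X → P X) ∧ ∀ A, goodAbs A → Q A := by
  have key : (∀ X : QTerm var varsort index bindex opsym, QGood X → P (tmk X)) ∧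
      ∀ A : QAbs var varsort index bindex opsym, QGoodAbs A → Q (amk A) := by
    refine QGood.induction var' (fun d inp binp hgood hinp hbinp => ?_) fun xs x X hX ih => ?_
    · rw [tmk_qOp hgood]
      obtain ⟨hg, hg', hs, hs'⟩ := qGood_qOp.1 hgood
      exact op _ _ _ (liftP_liftF.2 fun i X hX => good_tmk.2 (hg i X hX))
        (liftP_liftF.2 fun j A hA => goodAbs_amk.2 (hg' j A hA))
        (smallDom_liftF.2 hs) (smallDom_liftF.2 hs') (liftP_liftF.2 hinp) (liftP_liftF.2 hbinp)
    · rw [amk_qAbs hX]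
      exact abs xs x _ (good_tmk.2 hX) ih
  exact ⟨fun X hX => tmk_trep X ▸ key.1 _ hX, fun A hA => amk_arep A ▸ key.2 _ hA⟩

/-! ### Substitution -/

theorem exists_alpha_qSubst (hY : QGood Y) (y : var) (ys : varsort) :
    (∀ X, QGood X → ∃ Z X', Alpha X X' ∧ QSubst X' Y y ys Z) ∧
    ∀ A, QGoodAbs A → ∃ B A', AlphaAbs A A' ∧ QSubstAbs A' Y y ys B := by
  refine QGood.perm_induction (fun xs x => ?_) (fun d inp binp _ hinp hbinp => ?_)
    fun xs x X hX ih => ?_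
  · by_cases h : (xs, x) = (ys, y)
    · cases h
      exact ⟨Y, _, .qVar, .var_eq⟩
    · exact ⟨_, _, .qVar, .var_ne h⟩
  · obtain ⟨out, hout⟩ := exists_liftR hinp
    obtain ⟨bout, hbout⟩ := exists_liftR hbinp
    obtain ⟨inp', hα, hσ⟩ := liftR_comp.1 hout
    obtain ⟨binp', hα', hσ'⟩ := liftR_comp.1 hbout
    rw [liftR_iff] at hσ hσ'
    exact ⟨.qOp d out bout, _, alpha_qOp_left.2 ⟨_, _, rfl, hα, hα'⟩,
      .op hσ.1 hσ.2 hσ'.1 hσ'.2⟩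
  · obtain ⟨w, hwy, hwX, hwY⟩ := ((eventually_mostVars_ne y).and <| (hX.eventually_qFresh xs).and
      (hY.eventually_qFresh xs)).exists
    obtain ⟨Z, X', hα, hσ⟩ := ih (sortSwap xs w x)
    refine ⟨.qAbs xs w Z, .qAbs xs w X', ?_, .abs (by simp [hwy]) hwY hσ⟩
    exact alpha_trans.2 _ (.qAbs hX) _ _ (alphaAbs_rename hX hwX)
      (alphaAbs_qAbs_of_alpha ((qGood_smul_iff _).1 X |>.2 hX) hα)

theorem substRel_subst {X Y : Term var varsort index bindex opsym} (hX : good X) (hY : good Y) :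
    SubstRel X Y y ys (subst X Y y ys) := by
  obtain ⟨Z, X', hα, hσ⟩ := (exists_alpha_qSubst hY y ys).1 _ hX
  have hex : ∃ Z, SubstRel X Y y ys Z :=
    ⟨tmk Z, X', Z, (Quot.sound hα).symm.trans (tmk_trep X), rfl, hσ⟩
  rw [subst, dif_pos hex]
  exact hex.choose_spec

theorem substAbsRel_substAbs {A : Abstr var varsort index bindex opsym}
    {Y : Term var varsort index bindex opsym} (hA : goodAbs A) (hY : good Y) :
    SubstAbsRel A Y y ys (substAbs A Y y ys) := by
  obtain ⟨B, A', hα, hσ⟩ := (exists_alpha_qSubst hY y ys).2 _ hA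
  have hex : ∃ B, SubstAbsRel A Y y ys B :=
    ⟨amk B, A', B, (Quot.sound hα).symm.trans (amk_arep A), rfl, hσ⟩
  rw [substAbs, dif_pos hex]
  exact hex.choose_spec

namespace FSModel

variable (M : FSModel var varsort index bindex opsym)

/- The bound variable is first renamed to a fresh `w`, so that both the swapping and the
substitution pass under the binder. -/
theorem interpAbs_sortSwap_qAbs (hZ : QGood Z)
    (ih : ∀ (p : varsort → Equiv.Perm var) ys u v, QFresh ys v (p • Z) →
      M.interp (sortSwap ys v u • p • Z) = M.SUBST (M.interp (p • Z)) (M.VAR ys v) u ys)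
    (hy : QFreshAbs xs y (.qAbs zs z Z)) :
    M.interpAbs (sortSwap xs y x • .qAbs zs z Z) =
      M.SUBSTABS (M.interpAbs (.qAbs zs z Z)) (M.VAR xs y) x xs := by
  set p := sortSwap xs y x
  have hpZ := (qGood_smul_iff p).1 Z |>.2 hZ
  obtain ⟨w, hwx, hwy, hwZ, hwpZ⟩ := ((eventually_mostVars_ne x).and <|
    (eventually_mostVars_ne y).and <| (hZ.eventually_qFresh zs).and
    (hpZ.eventually_qFresh zs)).exists
  have rename (r : varsort → Equiv.Perm var) (u) (hw : QFresh zs w (r • Z)) :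
      M.ABS zs u (M.interp (r • Z)) = M.ABS zs w (M.interp (sortSwap zs w u • r • Z)) := by
    rw [ih r zs u w hw]
    exact M.abs_rename _ _ _ _ ((M.fresh_interp _ _).1 _ hw)
  have rename_z : M.interpAbs (.qAbs zs z Z) = M.ABS zs w (M.interp (sortSwap zs w z • Z)) := by
    simpa [interpAbs_qAbs] using rename 1 z (by simpa)
  have hpw : p zs w = w := sortSwap_of_ne (by simp [hwy]) (by simp [hwx])
  calc M.interpAbs (p • .qAbs zs z Z)
      = M.ABS zs (p zs z) (M.interp (p • Z)) := rfl
    _ = M.ABS zs w (M.interp (p • sortSwap zs w z • Z)) := by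
      rw [rename p _ hwpZ, smul_sortSwap_smul p, hpw]
    _ = M.ABS zs w (M.SUBST (M.interp (sortSwap zs w z • Z)) (M.VAR xs y) x xs) := by
      rw [ih _ xs x y (hy.sortSwap_smul hwZ (by simp [hwy.symm]))]
    _ = M.SUBSTABS (M.ABS zs w (M.interp (sortSwap zs w z • Z))) (M.VAR xs y) x xs :=
      (M.subst_abs _ _ _ _ _ _ (by simp [hwx]) (M.fresh_var _ _ _ _ (by simp [hwy]))).symm
    _ = M.SUBSTABS (M.interpAbs (.qAbs zs z Z)) (M.VAR xs y) x xs := by rw [rename_z]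

theorem interp_sortSwap :
    (∀ X, QGood X → ∀ xs x y, QFresh xs y X →
      M.interp (sortSwap xs y x • X) = M.SUBST (M.interp X) (M.VAR xs y) x xs) ∧
    ∀ A, QGoodAbs A → ∀ xs x y, QFreshAbs xs y A →
      M.interpAbs (sortSwap xs y x • A) = M.SUBSTABS (M.interpAbs A) (M.VAR xs y) x xs := by
  refine QGood.perm_induction (fun zs z xs x y h => ?_)
    (fun d inp binp _ hinp hbinp xs x y h => ?_) fun zs z Z hZ ih xs x y h => ?_
  · rw [qFresh_qVar] at h
    change M.VAR _ _ = M.SUBST (M.VAR _ _) _ _ _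
    by_cases hx : (zs, z) = (xs, x)
    · cases hx
      rw [sortSwap_right, M.subst_var_eq]
    · rw [sortSwap_of_ne h.symm hx, M.subst_var_ne _ _ _ _ _ hx]
  · obtain ⟨h, h'⟩ := qFresh_qOp.1 h
    rw [smul_qOp, interp_qOp, interp_qOp, M.subst_op]
    simp only [liftF_liftF]
    rw [liftF_congr fun i X hX => hinp i X hX xs x y (h i X hX),
      liftF_congr fun j A hA => hbinp j A hA xs x y (h' j A hA)]
  · exact M.interpAbs_sortSwap_qAbs hZ ih h

theorem interp_eq_of_alpha :
    (∀ {X Y}, Alpha X Y → QGood X → M.interp X = M.interp Y) ∧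
    ∀ {A B}, AlphaAbs A B → QGoodAbs A → M.interpAbs A = M.interpAbs B := by
  refine Alpha.induction (fun _ _ _ => rfl) (fun d inp binp inp' binp' hinp hbinp h => ?_)
    fun xs x x' X X' y hx hx' hX hX' hα ih h => ?_
  · obtain ⟨hg, hg', -⟩ := qGood_qOp.1 h
    rw [interp_qOp, interp_qOp,
      liftF_eq_liftF_iff.2 (hinp.imp fun i X hX _ h => h (hg i X hX)),
      liftF_eq_liftF_iff.2 (hbinp.imp fun j A hA _ h => h (hg' j A hA))]
  · rw [qGoodAbs_qAbs] at h
    have hswap := (qGood_smul_iff (sortSwap xs y x)).1 X |>.2 h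
    have h' := (qGood_smul_iff _).1 X' |>.1 (qGood_of_alpha.1 hα hswap)
    rw [interpAbs_qAbs, interpAbs_qAbs]
    refine M.abs_cong _ _ _ y _ _ (by simp [hx, hx']) ((M.fresh_interp _ _).1 X hX)
      ((M.fresh_interp _ _).1 X' hX') ?_
    rw [← M.interp_sortSwap.1 X h _ _ _ hX, ← M.interp_sortSwap.1 X' h' _ _ _ hX', ih hswap]

/-- The interpretation of terms in the model `M`, through representatives. -/
noncomputable def eval (X : Term var varsort index bindex opsym) : M.T :=
  M.interp (trep X)

/-- The interpretation of abstractions in the model `M`, through representatives. -/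
noncomputable def evalAbs (A : Abstr var varsort index bindex opsym) : M.A :=
  M.interpAbs (arep A)

theorem eval_tmk (hX : QGood X) : M.eval (tmk X) = M.interp X :=
  (M.interp_eq_of_alpha.1 ((tmk_eq_tmk_iff hX).1 (tmk_trep _).symm) hX).symm

theorem evalAbs_amk (hA : QGoodAbs A) : M.evalAbs (amk A) = M.interpAbs A :=
  (M.interp_eq_of_alpha.2 ((amk_eq_amk_iff hA).1 (amk_arep _).symm) hA).symm

theorem eval_Op {inp : Input index (Term var varsort index bindex opsym)}
    {binp : Input bindex (Abstr var varsort index bindex opsym)} (hinp : liftP good inp)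
    (hbinp : liftP goodAbs binp) (hs : smallDom var inp) (hs' : smallDom var binp) :
    M.eval (Op d inp binp) = M.OP d (liftF M.eval inp) (liftF M.evalAbs binp) := by
  have hgood : QGood (.qOp d (liftF trep inp) (liftF arep binp)) := qGood_qOp.2
    ⟨liftP_liftF.2 hinp, liftP_liftF.2 hbinp, smallDom_liftF.2 hs, smallDom_liftF.2 hs'⟩
  rw [Op, M.eval_tmk hgood, interp_qOp, liftF_liftF, liftF_liftF]
  rfl

theorem eval_subst {X Y : Term var varsort index bindex opsym} (hX : good X) (hY : good Y) :
    M.eval (subst X Y y ys) = M.SUBST (M.eval X) (M.eval Y) y ys := by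
  obtain ⟨qX, qZ, rfl, hZ, hσ⟩ := substRel_subst (y := y) (ys := ys) hX hY
  rw [good_tmk] at hX
  rw [← hZ, M.eval_tmk (hσ.qGood hY hX), M.eval_tmk hX, M.interp_of_qSubst hσ, eval]

theorem evalAbs_substAbs {A : Abstr var varsort index bindex opsym}
    {Y : Term var varsort index bindex opsym} (hA : goodAbs A) (hY : good Y) :
    M.evalAbs (substAbs A Y y ys) = M.SUBSTABS (M.evalAbs A) (M.eval Y) y ys := by
  obtain ⟨qA, qB, rfl, hB, hσ⟩ := substAbsRel_substAbs (y := y) (ys := ys) hA hY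
  rw [goodAbs_amk] at hA
  rw [← hB, M.evalAbs_amk (hσ.qGoodAbs hY hA), M.evalAbs_amk hA, M.interpAbs_of_qSubstAbs hσ, eval]

theorem isFSMorphism_eval : IsFSMorphism M M.eval M.evalAbs :=
  ⟨fun _ _ => M.eval_tmk .qVar, fun _ _ _ => M.eval_Op, fun _ _ _ hX => M.evalAbs_amk (.qAbs hX),
    fun _ _ _ _ => M.eval_subst, fun _ _ _ _ => M.evalAbs_substAbs,
    fun _ _ _ _ => (M.fresh_interp _ _).1 _, fun _ _ _ _ => (M.fresh_interp _ _).2 _⟩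

end FSModel

theorem IsFSMorphism.eq_of_good {M : FSModel var varsort index bindex opsym}
    {f g : Term var varsort index bindex opsym → M.T}
    {fAbs gAbs : Abstr var varsort index bindex opsym → M.A}
    (hg : IsFSMorphism M g gAbs) (hf : IsFSMorphism M f fAbs) :
    (∀ X, good X → g X = f X) ∧ ∀ A, goodAbs A → gAbs A = fAbs A := by
  obtain ⟨gVar, gOp, gAbs, -⟩ := hg
  obtain ⟨fVar, fOp, fAbs, -⟩ := hf
  refine good_induction (fun xs x => ?_) (fun d inp binp h h' hs hs' hinp hbinp => ?_)
    fun xs x X hX ih => ?_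
  · rw [gVar, fVar]
  · rw [gOp d inp binp h h' hs hs', fOp d inp binp h h' hs hs', liftF_congr hinp,
      liftF_congr hbinp]
  · rw [gAbs xs x X hX, fAbs xs x X hX, ih]

end Regular

end Quasiterms

/-- the good terms and abstractions form the initial FS model:
for every FS model there exist functions `f`, `fAbs` commuting with the
constructors and substitution and preserving freshness on good items, and any
two such functions agree on good items. -/
theorem initial_FS_model (hinf : Cardinal.aleph0 ≤ Cardinal.mk var)
    (hreg : (Cardinal.mk var).IsRegular)
    (M : FSModel var varsort index bindex opsym) :
    ∃ (f : Term var varsort index bindex opsym → M.T) (fAbs : Abstr var varsort index bindex opsym → M.A),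
      IsFSMorphism M f fAbs ∧
      ∀ (g : Term var varsort index bindex opsym → M.T) (gAbs : Abstr var varsort index bindex opsym → M.A),
        IsFSMorphism M g gAbs →
        (∀ X, good X → g X = f X) ∧ (∀ A, goodAbs A → gAbs A = fAbs A) := by
  have := Fact.mk hreg
  exact ⟨M.eval, M.evalAbs, M.isFSMorphism_eval, fun g gAbs hg => hg.eq_of_good M.isFSMorphism_eval⟩

end Binding
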